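/- arXiv:2008.12313 — 2 statements merged into one kernel-verified Lean document; each statement's English description precedes it below -/
import Mathlib

section
/- With H, G_i, G = ⋁_H{G_1,…,G_k}, ρ_{ij}, w_i, α, β, γ, δ (α ≠ 0), U(G), U_i, and P_i = U_i + δw_i I as above, assume additionally that each G_i is r_i-regular. Set p_i = αr_i + β + γn_i + δ(r_i + w_i), which is an eigenvalue of P_i with eigenvector 1_{n_i}. Then (∏_{i=1}^k (λ − p_i)) · det(λI − U(G)) = (∏_{i=1}^k det(λI − P_i)) · det(λI_k − Ũ′(G)), where Ũ′(G) is the k×k real matrix with diagonal entries p_i and (i,j) off-diagonal entries √(n_i n_j)(ρ_{ij}α + γ). Equivalently, the spectrum of U(G) is the multiset union of the spectra of the P_i with one copy of p_i removed from each, together with the spectrum of Ũ′(G). -/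
/-!
The off-diagonal blocks of `λI - U(G)` are constant, so `λI - U(G) = D - E C Eᵀ`, where
`D` is the block diagonal matrix of the `Bᵢ = λI - Pᵢ`, `E` is the 0-1 incidence matrix between
vertices and blocks, and `C` is the `k × k` matrix of the constants `ρᵢⱼα + γ` with zero diagonal.
Regularity says that `Bᵢ 1 = (λ - pᵢ) 1`, that is, `D E = E Δ` with `Δ = diag (λ - pᵢ)`. Hence
`D - E C Eᵀ = D (1 - E Δ⁻¹ C Eᵀ)`, and the Weinstein-Aronszajn identity
`det (1 - X Y) = det (1 - Y X)` reduces the second factor to `det (1 - C Eᵀ E Δ⁻¹)`, where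
`Eᵀ E = diag (nᵢ)`. Multiplying by `det Δ` gives `det (Δ - C diag (nᵢ))`, and
conjugating by `diag (√nᵢ)` symmetrizes this to `det (λI - Ũ′(G))`. All of this takes place over
the field of rational functions in `λ`, where `λ - pᵢ` is invertible; the computation is
`det_blockDiagonal_sub_const`.
-/

open Matrix

set_option synthInstance.maxHeartbeats 1000000
set_option maxHeartbeats 1000000

/-- The characteristic matrix `λI - M` viewed over the field of rational functions. -/
noncomputable def resolventForm {K : Type*} [Field K] {n : Type*} [Fintype n] [DecidableEq n]
    (M : Matrix n n K) : Matrix n n (RatFunc K) :=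
  Matrix.diagonal (fun _ => (RatFunc.X : RatFunc K)) - M.map (fun x => RatFunc.C x)

/-- The universal adjacency matrix `αA(G) + βI + γJ + δD(G)` of a graph `G`. -/
noncomputable def univMat {V : Type*} [Fintype V] [DecidableEq V]
    (G : SimpleGraph V) [DecidableRel G.Adj] (α β γ δ : ℝ) : Matrix V V ℝ :=
  α • (G.adjMatrix ℝ) + β • (1 : Matrix V V ℝ) + γ • (Matrix.of fun _ _ => (1 : ℝ)) +
    δ • Matrix.diagonal (fun v => (G.degree v : ℝ))

/-- The incidence matrix between the elements of a disjoint union and its blocks: its `i`-th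
column is the indicator vector of the `i`-th block. -/
def blockIncidence (F : Type*) [Field F] {k : ℕ} (n : Fin k → ℕ) :
    Matrix (Σ i, Fin (n i)) (Fin k) F :=
  Matrix.of fun x i => if x.1 = i then 1 else 0

lemma blockIncidence_transpose_mul_self {F : Type*} [Field F] {k : ℕ} (n : Fin k → ℕ) :
    (blockIncidence F n)ᵀ * blockIncidence F n = diagonal fun i => (n i : F) := by
  ext i j
  simp only [blockIncidence, mul_apply, transpose_apply, of_apply, Fintype.sum_sigma,
    diagonal_apply]
  by_cases h : i = j
  · subst h
    simp
  · have h' : ¬ j = i := fun e => h e.symm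
    simp [h, h']

lemma blockIncidence_conj {F : Type*} [Field F] {k : ℕ} (n : Fin k → ℕ)
    (C : Matrix (Fin k) (Fin k) F) :
    blockIncidence F n * (C * (blockIncidence F n)ᵀ) = Matrix.of fun x y => C x.1 y.1 := by
  ext x y
  simp [blockIncidence, mul_apply]

/-- Constant row sums of the blocks intertwine the block diagonal matrix with the diagonal
matrix of the row sums. -/
lemma blockDiagonal_mul_blockIncidence {F : Type*} [Field F] {k : ℕ} (n : Fin k → ℕ)
    (B : ∀ i, Matrix (Fin (n i)) (Fin (n i)) F) (m : Fin k → F)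
    (hB : ∀ i a, ∑ b, B i a b = m i) :
    blockDiagonal' B * blockIncidence F n = blockIncidence F n * diagonal m := by
  ext ⟨i, a⟩ j
  simp only [blockIncidence, mul_apply, of_apply, Fintype.sum_sigma]
  by_cases h : i = j
  · subst h
    rw [Finset.sum_eq_single i]
    · simp [blockDiagonal'_apply_eq, hB]
    · intro l _ hl
      simp [hl]
    · simp
  · rw [Finset.sum_eq_zero]
    · simp [h]
    · intro l _
      by_cases hl : l = j
      · subst hl
        simp [blockDiagonal'_apply_ne _ _ _ h]
      · simp [hl]

lemma det_blockDiagonal_sigma {F : Type*} [Field F] {k : ℕ} (n : Fin k → ℕ)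
    (B : ∀ i, Matrix (Fin (n i)) (Fin (n i)) F) :
    (blockDiagonal' B).det = ∏ i, (B i).det := by
  rw [(blockTriangular_blockDiagonal' B).det_fintype]
  refine Finset.prod_congr rfl fun i _ => ?_
  rw [← det_submatrix_equiv_self (Equiv.sigmaSubtype (β := fun i => Fin (n i)) i).symm]
  congr 1
  ext a b
  exact blockDiagonal'_apply_eq B i a b

/-- Reduction of the determinant of a block diagonal matrix perturbed by constant blocks, the
diagonal blocks having constant row sums `m i`, to a `k × k` determinant. Here `s i` is a square
root of the block size `n i`. -/
lemma det_blockDiagonal_sub_const {F : Type*} [Field F] {k : ℕ} (n : Fin k → ℕ)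
    (B : ∀ i, Matrix (Fin (n i)) (Fin (n i)) F) (m : Fin k → F) (hm : ∀ i, m i ≠ 0)
    (hB : ∀ i a, ∑ b, B i a b = m i) (C : Matrix (Fin k) (Fin k) F)
    (s : Fin k → F) (hs : ∀ i, s i ≠ 0) (hsn : ∀ i, s i * s i = n i) :
    (∏ i, m i) * (blockDiagonal' B - Matrix.of fun x y : Σ i, Fin (n i) => C x.1 y.1).det =
      (∏ i, (B i).det) * (diagonal m - Matrix.of fun i j => s i * C i j * s j).det := by
  set E := blockIncidence F n with hE
  have hinv : diagonal m * diagonal (fun i => (m i)⁻¹) = (1 : Matrix (Fin k) (Fin k) F) := by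
    rw [diagonal_mul_diagonal, ← diagonal_one]
    congr 1
    ext i
    exact mul_inv_cancel₀ (hm i)
  have hinv' : diagonal (fun i => (m i)⁻¹) * diagonal m = (1 : Matrix (Fin k) (Fin k) F) :=
    mul_eq_one_comm.mp hinv
  have hfac : blockDiagonal' B - Matrix.of (fun x y => C x.1 y.1) =
      blockDiagonal' B * (1 - (E * diagonal fun i => (m i)⁻¹) * (C * Eᵀ)) := by
    rw [Matrix.mul_sub, Matrix.mul_one, ← Matrix.mul_assoc, ← Matrix.mul_assoc _ E,
      hE, blockDiagonal_mul_blockIncidence n B m hB, Matrix.mul_assoc _ (diagonal m), hinv,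
      Matrix.mul_one, blockIncidence_conj]
  have hsmall : C * Eᵀ * (E * diagonal fun i => (m i)⁻¹) =
      C * (diagonal fun i => (n i : F)) * diagonal fun i => (m i)⁻¹ := by
    rw [Matrix.mul_assoc C, ← Matrix.mul_assoc Eᵀ, hE, blockIncidence_transpose_mul_self,
      Matrix.mul_assoc]
  have hsim : diagonal s * (diagonal m - C * diagonal fun i => (n i : F)) =
      (diagonal m - Matrix.of fun i j => s i * C i j * s j) * diagonal s := by
    ext i j
    by_cases h : i = j
    · subst h
      simp [← hsn]
      ring
    · simp [h, ← hsn]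
      ring
  have hdet : (diagonal m - C * diagonal fun i => (n i : F)).det =
      (diagonal m - Matrix.of fun i j => s i * C i j * s j).det := by
    have h := congrArg Matrix.det hsim
    rw [det_mul, det_mul, mul_comm] at h
    refine mul_right_cancel₀ ?_ h
    rw [det_diagonal]
    exact Finset.prod_ne_zero_iff.mpr fun i _ => hs i
  rw [hfac, det_mul, det_blockDiagonal_sigma, det_one_sub_mul_comm, hsmall, ← hdet,
    mul_left_comm, mul_comm (∏ i, m i), ← det_diagonal (d := m), ← det_mul, Matrix.sub_mul,
    Matrix.one_mul, Matrix.mul_assoc _ _ (diagonal m), hinv', Matrix.mul_one]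

/-- An `r`-regular graph has a universal adjacency matrix with constant row sums. -/
lemma univMat_mulVec_one {V : Type*} [Fintype V] [DecidableEq V] (G : SimpleGraph V)
    [DecidableRel G.Adj] (α β γ δ : ℝ) (r : ℕ) (h : ∀ v, G.degree v = r) :
    univMat G α β γ δ *ᵥ (fun _ => (1 : ℝ)) =
      fun _ => α * r + β + γ * Fintype.card V + δ * r := by
  have hJ : (Matrix.of fun _ _ => (1 : ℝ) : Matrix V V ℝ) *ᵥ (fun _ => (1 : ℝ)) =
      fun _ => (Fintype.card V : ℝ) := by
    ext v
    simp [mulVec, dotProduct]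
  have hA : G.adjMatrix ℝ *ᵥ (fun _ => (1 : ℝ)) = fun _ => (r : ℝ) := by
    ext v
    simp [SimpleGraph.adjMatrix_mulVec_apply, h]
  have hD : (diagonal fun v => (G.degree v : ℝ)) *ᵥ (fun _ => (1 : ℝ)) = fun _ => (r : ℝ) := by
    ext v
    simp [mulVec_diagonal, h]
  ext v
  simp only [univMat, add_mulVec, smul_mulVec, one_mulVec, hJ, hA, hD, Pi.add_apply,
    Pi.smul_apply, smul_eq_mul, mul_one]

/-- Universal spectrum of the `H`-join of regular graphs: if each `Gs i` is `rᵢ`-regular then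
`pᵢ = αrᵢ + β + γnᵢ + δ(rᵢ + wᵢ)` is an eigenvalue of `Pᵢ = Uᵢ + δwᵢI` with eigenvector `1`,
and `(∏ᵢ (λ - pᵢ)) · det(λI - U(G)) = (∏ᵢ det(λI - Pᵢ)) · det(λI_k - Ũ′(G))`, where `Ũ′(G)`
has diagonal entries `pᵢ` and off-diagonal entries `√(nᵢnⱼ)(ρᵢⱼα + γ)`. -/
theorem univ_spec_HJoin_regular {k : ℕ} (n : Fin k → ℕ) (hn : ∀ i, 1 ≤ n i)
    (H : SimpleGraph (Fin k)) [DecidableRel H.Adj]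
    (Gs : ∀ i, SimpleGraph (Fin (n i))) [∀ i, DecidableRel (Gs i).Adj]
    (ρ : Fin k → Fin k → ℝ) (hρ : ∀ i j, ρ i j = if H.Adj i j then 1 else 0)
    (w : Fin k → ℝ) (hw : ∀ i, w i = ∑ l ∈ H.neighborFinset i, (n l : ℝ))
    (α β γ δ : ℝ) (hα : α ≠ 0)
    (r : Fin k → ℕ) (hreg : ∀ i (a : Fin (n i)), (Gs i).degree a = r i)
    (P : ∀ i, Matrix (Fin (n i)) (Fin (n i)) ℝ)
    (hP : ∀ i, P i = univMat (Gs i) α β γ δ + (δ * w i) • (1 : Matrix _ _ ℝ))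
    (UG : Matrix (Σ i, Fin (n i)) (Σ i, Fin (n i)) ℝ)
    (hdiag : ∀ i (a b : Fin (n i)), UG ⟨i, a⟩ ⟨i, b⟩ = P i a b)
    (hoff : ∀ i j (a : Fin (n i)) (b : Fin (n j)), i ≠ j →
      UG ⟨i, a⟩ ⟨j, b⟩ = ρ i j * α + γ)
    (p : Fin k → ℝ)
    (hp : ∀ i, p i = α * r i + β + γ * n i + δ * (r i + w i)) :
    (∀ i, P i *ᵥ (fun _ => (1 : ℝ)) = p i • (fun _ => (1 : ℝ))) ∧
    (∏ i, (RatFunc.X - RatFunc.C (p i))) * (resolventForm UG).det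
      = (∏ i, (resolventForm (P i)).det) *
        (resolventForm (Matrix.of fun i j : Fin k =>
          if i = j then p i
          else Real.sqrt ((n i : ℝ) * (n j : ℝ)) * (ρ i j * α + γ))).det := by
  have heig : ∀ i, P i *ᵥ (fun _ => (1 : ℝ)) = p i • (fun _ => (1 : ℝ)) := by
    intro i
    rw [hP i, add_mulVec, univMat_mulVec_one _ _ _ _ _ (r i) (hreg i)]
    ext a
    simp [smul_mulVec, hp i]
    ring
  refine ⟨heig, ?_⟩
  have hrow : ∀ i a, ∑ b, resolventForm (P i) a b = RatFunc.X - RatFunc.C (p i) := by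
    intro i a
    have h := congrFun (heig i) a
    simp only [mulVec, dotProduct, mul_one, Pi.smul_apply, smul_eq_mul] at h
    simp only [resolventForm, Matrix.sub_apply, Matrix.map_apply, Finset.sum_sub_distrib, ← map_sum, h]
    simp [diagonal_apply]
  have hX : ∀ i, (RatFunc.X - RatFunc.C (p i) : RatFunc ℝ) ≠ 0 := by
    intro i h
    rw [← RatFunc.algebraMap_X, ← RatFunc.algebraMap_C, ← map_sub] at h
    exact Polynomial.X_sub_C_ne_zero (p i) (RatFunc.algebraMap_injective ℝ (by simpa using h))
  have hpos : ∀ i, (0 : ℝ) < n i := fun i => by exact_mod_cast hn i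
  let C : Matrix (Fin k) (Fin k) (RatFunc ℝ) :=
    Matrix.of fun i j => if i = j then 0 else RatFunc.C (ρ i j * α + γ)
  have key := det_blockDiagonal_sub_const n (fun i => resolventForm (P i)) _ hX hrow C
    (fun i => RatFunc.C (Real.sqrt (n i)))
    (fun i => by simpa using (Real.sqrt_pos.mpr (hpos i)).ne')
    (fun i => by rw [← map_mul, Real.mul_self_sqrt (hpos i).le, map_natCast])
  have hbig : resolventForm UG =
      blockDiagonal' (fun i => resolventForm (P i)) - Matrix.of fun x y => C x.1 y.1 := by
    ext ⟨i, a⟩ ⟨j, b⟩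
    by_cases h : i = j
    · subst h
      simp [resolventForm, C, hdiag, diagonal_apply, blockDiagonal'_apply_eq]
    · rw [Matrix.sub_apply, blockDiagonal'_apply_ne _ _ _ h]
      simp [resolventForm, C, hoff i j a b h, h]
  have hquot : resolventForm (Matrix.of fun i j : Fin k =>
        if i = j then p i else Real.sqrt ((n i : ℝ) * (n j : ℝ)) * (ρ i j * α + γ)) =
      (diagonal fun i => RatFunc.X - RatFunc.C (p i)) -
        Matrix.of fun i j => RatFunc.C (Real.sqrt (n i)) * C i j * RatFunc.C (Real.sqrt (n j)) := by
    ext i j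
    by_cases h : i = j
    · subst h
      simp [resolventForm, C]
    · simp only [resolventForm, C, Matrix.sub_apply, Matrix.map_apply, of_apply, if_neg h,
        diagonal_apply_ne _ h, ← map_mul, Real.sqrt_mul (hpos i).le]
      congr 2
      ring
  rw [hbig, hquot, key]
end

section
/- With H, G_i, G = ⋁_H{G_1,…,G_k}, ρ_{ij}, w_i, t ∈ ℝ, M(G) = A(G) − tD(G), M_i = A_i − tD_i, and P_i = M_i − tw_i I as above, assume additionally that each G_i is r_i-regular. Set p_i = r_i − t(r_i + w_i), which is an eigenvalue of P_i with eigenvector 1_{n_i}. Then (∏_{i=1}^k (λ − p_i)) · det(λI − M(G)) = (∏_{i=1}^k det(λI − P_i)) · det(λI_k − M̃′(G)), where M̃′(G) is the k×k real matrix with diagonal entries p_i and (i,j) off-diagonal entries √(n_i n_j) ρ_{ij}. Equivalently, the spectrum of M(G) is the multiset union of the spectra of the P_i with one copy of p_i removed from each, together with the spectrum of M̃′(G). -/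
/-!
Write `Λ = diag(λ - pᵢ)`, `N = diag(nᵢ)`, `R = (ρᵢⱼ)`, let `B` be the block diagonal matrix with
blocks `λI - Pᵢ`, and let `S` be the matrix whose columns are the indicator vectors of the blocks.
Then `λI - M(G) = B - S R Sᵀ`. Regularity says that `1` is an eigenvector of every `Pᵢ`, that is
`B S = S Λ`; since `λ - pᵢ ≠ 0` in the field of rational functions, `S = B S Λ⁻¹`, so
`λI - M(G) = B (I - S Λ⁻¹ R Sᵀ)`. Sylvester's identity `det(I - XY) = det(I - YX)` together with
`Sᵀ S = N` gives `det(λI - M(G)) = det B · det(I - N Λ⁻¹ R)`. Multiplying by `det Λ` yields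
`det B · det(Λ - N R)` (`prod_mul_det_sub_blockConst`). Finally `Λ - N R` is conjugate, through
`diag(√nᵢ)`, to `Λ - N^{1/2} R N^{1/2} = λI - M̃′(G)` (`det_sub_diagonal_mul_symmetrize`); this is
where `nᵢ ≠ 0` is used.
-/

open Matrix

set_option synthInstance.maxHeartbeats 1000000
set_option maxHeartbeats 1000000

section HJoinDet

variable {F : Type*} [Field F] {ι : Type*} [Fintype ι] [LinearOrder ι]
  {m : ι → Type*} [∀ i, Fintype (m i)] [∀ i, DecidableEq (m i)]

theorem det_blockDiagonal'_eq_prod (B : ∀ i, Matrix (m i) (m i) F) :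
    (blockDiagonal' B).det = ∏ i, (B i).det := by
  rw [(blockTriangular_blockDiagonal' B).det_fintype]
  refine Finset.prod_congr rfl fun i _ => ?_
  have h := det_submatrix_equiv_self (Equiv.sigmaSubtype (β := m) i)
    (B i)
  rw [← h]
  congr 1
  ext ⟨⟨j, a⟩, hj⟩ ⟨⟨j', b⟩, hj'⟩
  dsimp only at hj hj'
  subst hj
  subst hj'
  simp [toSquareBlock_def, blockDiagonal'_apply_eq, Equiv.sigmaSubtype]

/-- The indicator matrix of the blocks: its `j`-th column is the characteristic vector of the
`j`-th block of `Σ i, m i`. -/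
def blockIndicator (F : Type*) [Field F] {ι : Type*} [DecidableEq ι] (m : ι → Type*) :
    Matrix (Σ i, m i) ι F :=
  of fun x j => if x.1 = j then 1 else 0

/-- If the all-ones vector is an eigenvector of each diagonal block `B i`, with eigenvalue
`l i ≠ 0`, then subtracting from `blockDiagonal' B` a matrix that is constant on blocks, with
values `R`, changes the determinant through an `ι × ι` determinant only. -/
theorem prod_mul_det_sub_blockConst (B : ∀ i, Matrix (m i) (m i) F) (l : ι → F)
    (hl : ∀ i, l i ≠ 0) (hB : ∀ i a, ∑ b, B i a b = l i) (R : Matrix ι ι F) :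
    (∏ i, l i) * (blockDiagonal' B - of fun x y : (Σ i, m i) => R x.1 y.1).det =
      (∏ i, (B i).det) * (diagonal l - diagonal (fun i => (Fintype.card (m i) : F)) * R).det := by
  set S := blockIndicator F m with hS
  have hBS : blockDiagonal' B * S = S * diagonal l := by
    ext ⟨i, a⟩ j
    rw [mul_diagonal, mul_apply, Fintype.sum_sigma, Finset.sum_eq_single i]
    · simp [hS, blockIndicator, blockDiagonal'_apply_eq, hB]
      split_ifs with h <;> simp [h]
    · intro i' _ h
      simp [blockDiagonal'_apply_ne _ _ _ h.symm]
    · simp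
  have hSS : Sᵀ * S = diagonal fun i => (Fintype.card (m i) : F) := by
    ext i j
    rw [mul_apply, Fintype.sum_sigma]
    by_cases hij : i = j
    · subst hij
      simp [hS, blockIndicator]
    · simp [hS, blockIndicator, hij, Ne.symm hij]
  have hRS : (of fun x y : (Σ i, m i) => R x.1 y.1) = S * R * Sᵀ := by
    ext x y
    simp [hS, blockIndicator, mul_apply]
  have hll : diagonal l * diagonal (fun i => (l i)⁻¹) = 1 := by
    simp [diagonal_mul_diagonal, hl]
  have hll' : ∀ v : ι → F, diagonal l * (diagonal v * (diagonal (fun i => (l i)⁻¹) * R)) =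
      diagonal v * R := by
    intro v
    ext i j
    simp only [diagonal_mul]
    field_simp [hl i]
  -- `S = B S Λ⁻¹`, so `B` can be factored out without being inverted.
  have hfac : blockDiagonal' B - (of fun x y : (Σ i, m i) => R x.1 y.1) =
      blockDiagonal' B * (1 - S * (diagonal (fun i => (l i)⁻¹) * R * Sᵀ)) := by
    rw [hRS, Matrix.mul_sub, Matrix.mul_one, ← Matrix.mul_assoc, hBS]
    simp only [Matrix.mul_assoc]
    rw [← Matrix.mul_assoc (diagonal l), hll, Matrix.one_mul]
  rw [hfac, det_mul, det_blockDiagonal'_eq_prod, mul_left_comm, ← Matrix.mul_assoc,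
    det_one_sub_mul_comm, ← Matrix.mul_assoc, hSS, ← det_diagonal (d := l), ← det_mul, Matrix.mul_sub,
    Matrix.mul_one, hll']

/-- The two matrices are conjugate through `diagonal d`, which moves one factor of the weight
`d i * d i` from the rows of `R` to its columns. -/
theorem det_sub_diagonal_mul_symmetrize (l d : ι → F) (hd : ∀ i, d i ≠ 0) (R : Matrix ι ι F) :
    (diagonal l - diagonal (fun i => d i * d i) * R).det =
      (diagonal l - diagonal d * R * diagonal d).det := by
  have h : (diagonal l - diagonal (fun i => d i * d i) * R) * diagonal d =
      diagonal d * (diagonal l - diagonal d * R * diagonal d) := by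
    ext i j
    by_cases hij : i = j
    · subst hij
      simp only [diagonal_mul, mul_diagonal, Matrix.sub_apply, diagonal_apply_eq]
      ring
    · simp only [diagonal_mul, mul_diagonal, Matrix.sub_apply, diagonal_apply_ne _ hij]
      ring
  have hdet := congrArg det h
  rw [det_mul, det_mul, mul_comm] at hdet
  refine mul_left_cancel₀ ?_ hdet
  rw [det_diagonal]
  exact Finset.prod_ne_zero_iff.2 fun i _ => hd i

end HJoinDet

theorem ratFunc_X_sub_C_ne_zero {K : Type*} [Field K] (c : K) :
    (RatFunc.X - RatFunc.C c : RatFunc K) ≠ 0 := by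
  rw [← RatFunc.algebraMap_X, ← RatFunc.algebraMap_C, ← map_sub]
  exact RatFunc.algebraMap_ne_zero (Polynomial.X_sub_C_ne_zero c)

/-- Generalized spectrum of the `H`-join of regular graphs: with `Mᵢ = Aᵢ - tDᵢ`,
`Pᵢ = Mᵢ - twᵢI` and each `Gs i` being `rᵢ`-regular, `pᵢ = rᵢ - t(rᵢ + wᵢ)` is an eigenvalue
of `Pᵢ` with eigenvector `1`, and
`(∏ᵢ (λ - pᵢ)) · det(λI - M(G)) = (∏ᵢ det(λI - Pᵢ)) · det(λI_k - M̃′(G))`, where `M̃′(G)` has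
diagonal entries `pᵢ` and off-diagonal entries `√(nᵢnⱼ) ρᵢⱼ`. -/
theorem gen_spec_HJoin_regular {k : ℕ} (n : Fin k → ℕ) (hn : ∀ i, 1 ≤ n i)
    (H : SimpleGraph (Fin k)) [DecidableRel H.Adj]
    (Gs : ∀ i, SimpleGraph (Fin (n i))) [∀ i, DecidableRel (Gs i).Adj]
    (ρ : Fin k → Fin k → ℝ) (hρ : ∀ i j, ρ i j = if H.Adj i j then 1 else 0)
    (w : Fin k → ℝ) (hw : ∀ i, w i = ∑ l ∈ H.neighborFinset i, (n l : ℝ))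
    (t : ℝ)
    (r : Fin k → ℕ) (hreg : ∀ i (a : Fin (n i)), (Gs i).degree a = r i)
    (M : ∀ i, Matrix (Fin (n i)) (Fin (n i)) ℝ)
    (hM : ∀ i, M i = (Gs i).adjMatrix ℝ -
      t • Matrix.diagonal (fun a => ((Gs i).degree a : ℝ)))
    (P : ∀ i, Matrix (Fin (n i)) (Fin (n i)) ℝ)
    (hP : ∀ i, P i = M i - (t * w i) • (1 : Matrix _ _ ℝ))
    (MG : Matrix (Σ i, Fin (n i)) (Σ i, Fin (n i)) ℝ)
    (hdiag : ∀ i (a b : Fin (n i)), MG ⟨i, a⟩ ⟨i, b⟩ = P i a b)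
    (hoff : ∀ i j (a : Fin (n i)) (b : Fin (n j)), i ≠ j → MG ⟨i, a⟩ ⟨j, b⟩ = ρ i j)
    (p : Fin k → ℝ) (hp : ∀ i, p i = r i - t * (r i + w i)) :
    (∀ i, P i *ᵥ (fun _ => (1 : ℝ)) = p i • (fun _ => (1 : ℝ))) ∧
    (∏ i, (RatFunc.X - RatFunc.C (p i))) * (resolventForm MG).det
      = (∏ i, (resolventForm (P i)).det) *
        (resolventForm (Matrix.of fun i j : Fin k =>
          if i = j then p i else Real.sqrt ((n i : ℝ) * (n j : ℝ)) * ρ i j)).det := by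
  have hrow : ∀ i a, ∑ b, P i a b = p i := by
    intro i a
    have h1 : ∑ b, (Gs i).adjMatrix ℝ a b = r i := by
      rw [← hreg i a, ← SimpleGraph.card_neighborFinset_eq_degree,
        SimpleGraph.neighborFinset_eq_filter]
      simp
    simp only [hP, hM, hp, hreg, Matrix.sub_apply, Finset.sum_sub_distrib, h1, Matrix.smul_apply,
      diagonal_apply, one_apply, smul_eq_mul, mul_ite, mul_zero, mul_one, Finset.sum_ite_eq,
      Finset.mem_univ, if_true]
    ring
  refine ⟨fun i => funext fun a => by simp [mulVec, dotProduct, hrow], ?_⟩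
  have hsum : ∀ i a, ∑ b, resolventForm (P i) a b = RatFunc.X - RatFunc.C (p i) := by
    intro i a
    simp [resolventForm, Finset.sum_sub_distrib, diagonal_apply, ← map_sum, hrow]
  -- `H` has no loops, so subtracting `ρ` blockwise does not affect the diagonal blocks.
  have hρi : ∀ i, ρ i i = 0 := fun i => by simp [hρ]
  have hMG : resolventForm MG = blockDiagonal' (fun i => resolventForm (P i)) -
      of fun x y => (of fun i j => RatFunc.C (ρ i j)) x.1 y.1 := by
    ext ⟨i, a⟩ ⟨j, b⟩
    by_cases hij : i = j
    · subst hij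
      simp [resolventForm, blockDiagonal'_apply_eq, hdiag, hρi, diagonal_apply]
    · simp [resolventForm, blockDiagonal'_apply_ne _ _ _ hij, hoff _ _ _ _ hij, hij]
  have hsq : ∀ i, (Fintype.card (Fin (n i)) : RatFunc ℝ) =
      RatFunc.C (Real.sqrt (n i)) * RatFunc.C (Real.sqrt (n i)) := by
    intro i
    rw [← map_mul, Real.mul_self_sqrt (Nat.cast_nonneg _)]
    simp
  have hne : ∀ i, (RatFunc.C (Real.sqrt (n i)) : RatFunc ℝ) ≠ 0 := by
    intro i
    have h : (0 : ℝ) < n i := by exact_mod_cast hn i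
    simpa using (Real.sqrt_pos.2 h).ne'
  rw [hMG, prod_mul_det_sub_blockConst _ _ (fun i => ratFunc_X_sub_C_ne_zero (p i)) hsum]
  simp only [hsq]
  rw [det_sub_diagonal_mul_symmetrize _ _ hne]
  congr 2
  ext i j
  by_cases hij : i = j
  · subst hij
    simp [resolventForm, hρi]
  · simp [resolventForm, hij]
    ring
end
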